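/- Let α : a → List a → List a be a step function such that for every Boolean predicate p, every x : a and every list xs: if p x = false then (α x xs).filter p = xs.filter p, and if p x = true then (α x xs).filter p = α x (xs.filter p). Then the right fold List.foldr α [] : List a → List a is filter-equivariant. -/

import Mathlib

/-- A function `f : List a → List a` is filter-equivariant if it commutes with
`List.filter p` for every Boolean predicate `p`. -/
def FilterEquivariant {a : Type*} (f : List a → List a) : Prop :=
  ∀ (p : a → Bool) (xs : List a), f (xs.filter p) = (f xs).filter p

theorem foldr_filter_hom {α β γ : Type*} {p : α → Bool} {g₁ : α → β → β} {g₂ : α → γ → γ}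
    (f : β → γ) (hneg : ∀ x b, p x = false → f (g₁ x b) = f b)
    (hpos : ∀ x b, p x = true → f (g₁ x b) = g₂ x (f b)) (l : List α) (init : β) :
    (l.filter p).foldr g₂ (f init) = f (l.foldr g₁ init) := by
  have hom (x : α) (b : β) : (if p x then g₂ x (f b) else f b) = f (g₁ x b) := by
    cases hx : p x with
    | false => exact (hneg x b hx).symm
    | true => exact (hpos x b hx).symm
  calc (l.filter p).foldr g₂ (f init)
      = l.foldr (fun x c => if p x then g₂ x c else c) (f init) := List.foldr_filter
    _ = f (l.foldr g₁ init) := List.foldr_hom f hom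

theorem foldr_filterEquivariant {a : Type*} (step : a → List a → List a)
    (hfalse : ∀ (p : a → Bool) (x : a) (xs : List a), p x = false →
      (step x xs).filter p = xs.filter p)
    (htrue : ∀ (p : a → Bool) (x : a) (xs : List a), p x = true →
      (step x xs).filter p = step x (xs.filter p)) :
    FilterEquivariant (fun xs => List.foldr step [] xs) :=
  fun p xs => foldr_filter_hom (List.filter p) (hfalse p) (htrue p) xs []
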